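/- arXiv:1609.07121 — 3 statements merged into one kernel-verified Lean document; each statement's English description precedes it below -/
import Mathlib

section
/- Let b > 0, α ∈ ℝ, K > 1 and c₋, c₊ > 0. Let E : (K, ∞) → (0, ∞) be a differentiable strictly decreasing function with lim_{k→∞} E(k) = 0, satisfying c₋ k^{α} e^{−k²/b} ≤ E(k) ≤ c₊ k^{α} e^{−k²/b} and c₋ k^{α+1} e^{−k²/b} ≤ −E'(k) ≤ c₊ k^{α+1} e^{−k²/b} for all k > K, and let ρ be its inverse function, defined on an interval (0, s₀). Then ρ is differentiable and there exist s₁ ∈ (0, min(s₀,1)) and constants d₋, d₊ > 0 such that for all s ∈ (0, s₁), d₋ / (s (ln(1/s))^{1/2}) ≤ −ρ'(s) ≤ d₊ / (s (ln(1/s))^{1/2}). -/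
open MeasureTheory Real Set Filter

/-!
If `E k` is comparable to `k ^ α * exp (-k ^ 2 / b)` and `-E' k` to
`k ^ (α + 1) * exp (-k ^ 2 / b)`, then `-E' k` is comparable to `k * E k`, while `log (1 / E k)` is
comparable to `k ^ 2`: the power of `k` and the constants only contribute `O (log k)` to the
logarithm. At `k = ρ s` this says that `-E' (ρ s)` is comparable to `s * ρ s` and `ρ s` to
`log (1 / s) ^ (1 / 2)`, and the claim follows from `ρ' s = 1 / E' (ρ s)`. The same argument with
`k ^ p` in place of `k ^ 2` and `k ^ (α + p - 1)` in place of `k ^ (α + 1)` gives the exponent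
`1 - 1 / p` for the logarithm.
-/

open Asymptotics
open scoped Topology

section RightInverse

variable {β γ : Type*} [LinearOrder β] [LinearOrder γ] [TopologicalSpace γ]
  [OrderTopology γ] {f : β → γ} {g : γ → β} {a : β} {c : γ}

lemma tendsto_atTop_of_strictAntiOn_of_rightInverse [NoMaxOrder β]
    (hf : StrictAntiOn f (Ioi a)) (hfc : ∀ x > a, c < f x)
    (hg : ∀ᶠ y in 𝓝[>] c, a < g y ∧ f (g y) = y) :
    Tendsto g (𝓝[>] c) atTop := by
  obtain ⟨x, hx⟩ := exists_gt a
  refine tendsto_atTop.2 fun u => ?_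
  have ha : a < max u x := lt_max_of_lt_right hx
  filter_upwards [hg, Ioo_mem_nhdsGT (hfc _ ha)] with y ⟨hay, hfgy⟩ hy
  exact (le_max_left u x).trans ((hf.lt_iff_gt hay ha).1 (hfgy.symm ▸ hy.2)).le

variable [TopologicalSpace β] [OrderTopology β]

lemma continuousAt_of_strictAntiOn_of_rightInverse [DenselyOrdered β]
    (hf : StrictAntiOn f (Ioi a)) (hg : ∀ᶠ y in 𝓝 c, a < g y ∧ f (g y) = y) :
    ContinuousAt g c := by
  obtain ⟨hac, hfgc⟩ := hg.self_of_nhds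
  refine tendsto_order.2 ⟨fun u hu => ?_, fun u hu => ?_⟩
  · obtain ⟨v, hv, hvc⟩ := exists_between (max_lt hu hac)
    obtain ⟨huv, hav⟩ := max_lt_iff.1 hv
    have hfv : c < f v := hfgc ▸ hf hav hac hvc
    filter_upwards [hg, Iio_mem_nhds hfv] with y ⟨hay, hfgy⟩ hy
    exact huv.trans ((hf.lt_iff_gt hay hav).1 (hfgy.symm ▸ hy))
  · have hau : a < u := hac.trans hu
    have hfu : f u < c := hfgc ▸ hf hac hau hu
    filter_upwards [hg, Ioi_mem_nhds hfu] with y ⟨hay, hfgy⟩ hy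
    exact (hf.lt_iff_gt hau hay).1 (hfgy.symm ▸ hy)

end RightInverse

lemma strictAntiOn_Ioi_of_deriv_neg {f : ℝ → ℝ} {a : ℝ} (hf : ∀ x > a, deriv f x < 0) :
    StrictAntiOn f (Ioi a) := by
  refine strictAntiOn_of_deriv_neg (convex_Ioi a) (fun x hx => ?_) (by simpa using hf)
  exact (differentiableAt_of_deriv_ne_zero (hf x hx).ne).continuousAt.continuousWithinAt

lemma hasDerivAt_of_deriv_neg_of_rightInverse {f g : ℝ → ℝ} {a c : ℝ}
    (hf : ∀ x > a, deriv f x < 0) (hg : ∀ᶠ y in 𝓝 c, a < g y ∧ f (g y) = y) :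
    HasDerivAt g (deriv f (g c))⁻¹ c := by
  have hne : deriv f (g c) ≠ 0 := (hf _ hg.self_of_nhds.1).ne
  exact (differentiableAt_of_deriv_ne_zero hne).hasDerivAt.of_local_left_inverse
    (continuousAt_of_strictAntiOn_of_rightInverse (strictAntiOn_Ioi_of_deriv_neg hf) hg) hne
    (hg.mono fun _ hy => hy.2)

lemma exists_mem_Ioo_forall_of_eventually_nhdsGT {β : Type*} [LinearOrder β] [TopologicalSpace β]
    [OrderTopology β] [DenselyOrdered β] {P : β → Prop} {a r : β} (har : a < r)
    (h : ∀ᶠ s in 𝓝[>] a, P s) : ∃ t ∈ Ioo a r, ∀ s ∈ Ioo a t, P s := by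
  obtain ⟨u, hu, hP⟩ := (mem_nhdsGT_iff_exists_Ioo_subset' har).1 h
  obtain ⟨t, hat, ht⟩ := exists_between (lt_min har hu)
  exact ⟨t, ⟨hat, ht.trans_le (min_le_left r u)⟩,
    fun s hs => hP ⟨hs.1, hs.2.trans (ht.trans_le (min_le_right r u))⟩⟩

section Asymptotics

variable {ι : Type*} {l : Filter ι}

lemma isTheta_comp_tendsto {κ V W : Type*} [Norm V] [Norm W] {m : Filter κ} {f : ι → V}
    {g : ι → W} {u : κ → ι} (h : f =Θ[l] g) (hu : Tendsto u m l) :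
    (fun x => f (u x)) =Θ[m] fun x => g (u x) :=
  ⟨h.1.comp_tendsto hu, h.2.comp_tendsto hu⟩

lemma isTheta_neg_left {V W : Type*} [SeminormedAddCommGroup V] [Norm W] {f : ι → V} {g : ι → W} :
    (fun x => -f x) =Θ[l] g ↔ f =Θ[l] g :=
  and_congr isBigO_neg_left isBigO_neg_right

variable {f g : ι → ℝ}

lemma isTheta_of_eventually_mul_le {c C : ℝ} (hc : 0 < c) (hg : 0 ≤ᶠ[l] g)
    (h : ∀ᶠ x in l, c * g x ≤ f x ∧ f x ≤ C * g x) : f =Θ[l] g := by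
  constructor
  · refine .of_bound C ?_
    filter_upwards [h, hg] with x ⟨hlower, hupper⟩ hgx
    rwa [norm_of_nonneg ((mul_nonneg hc.le hgx).trans hlower), norm_of_nonneg hgx]
  · refine .of_bound c⁻¹ ?_
    filter_upwards [h, hg] with x ⟨hlower, _⟩ hgx
    rw [norm_of_nonneg ((mul_nonneg hc.le hgx).trans hlower), norm_of_nonneg hgx]
    exact (le_inv_mul_iff₀ hc).2 hlower

lemma exists_eventually_mul_le_of_isTheta (hf : 0 ≤ᶠ[l] f) (hg : 0 ≤ᶠ[l] g) (h : f =Θ[l] g) :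
    ∃ c > 0, ∃ C > 0, ∀ᶠ x in l, c * g x ≤ f x ∧ f x ≤ C * g x := by
  obtain ⟨C, hC, hupper⟩ := h.1.exists_pos
  obtain ⟨c, hc, hlower⟩ := h.2.exists_pos
  refine ⟨c⁻¹, inv_pos.2 hc, C, hC, ?_⟩
  filter_upwards [hf, hg, hupper.bound, hlower.bound] with x hfx hgx hxC hxc
  rw [norm_of_nonneg hfx, norm_of_nonneg hgx] at hxC hxc
  exact ⟨(inv_mul_le_iff₀ hc).2 hxc, hxC⟩

lemma isBigO_one_log_sub_log_of_isTheta (h : f =Θ[l] g) :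
    (fun x => log (f x) - log (g x)) =O[l] fun _ => (1 : ℝ) := by
  obtain ⟨C, hC, hupper⟩ := h.1.exists_pos
  obtain ⟨c, hc, hlower⟩ := h.2.exists_pos
  refine .of_bound (|log C| + |log c|) ?_
  filter_upwards [hupper.bound, hlower.bound, h.eq_zero_iff] with x hxC hxc hzero
  rw [norm_one, mul_one, norm_eq_abs]
  obtain hgx | hgx := eq_or_ne (g x) 0
  · rw [hgx, hzero.2 hgx, sub_self, abs_zero]
    positivity
  · have hfx : f x ≠ 0 := mt hzero.1 hgx
    have hlogC : log (f x) ≤ log C + log (g x) := by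
      simpa only [norm_eq_abs, log_abs, log_mul hC.ne' (abs_ne_zero.2 hgx)]
        using log_le_log (norm_pos_iff.2 hfx) hxC
    have hlogc : log (g x) ≤ log c + log (f x) := by
      simpa only [norm_eq_abs, log_abs, log_mul hc.ne' (abs_ne_zero.2 hfx)]
        using log_le_log (norm_pos_iff.2 hgx) hxc
    rw [abs_le]
    constructor <;> linarith [le_abs_self (log C), le_abs_self (log c),
      abs_nonneg (log C), abs_nonneg (log c)]

end Asymptotics

section ExponentialDecay

variable {p b α : ℝ} {E ρ : ℝ → ℝ}

lemma eventually_log_one_div_nonneg : ∀ᶠ s : ℝ in 𝓝[>] 0, 0 ≤ log (1 / s) := by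
  filter_upwards [Ioo_mem_nhdsGT one_pos] with s hs
  exact log_nonneg (one_le_one_div hs.1 hs.2.le)

lemma log_rpow_mul_exp {k : ℝ} (hk : 0 < k) (x : ℝ) :
    log (k ^ α * exp x) = α * log k + x := by
  rw [log_mul (rpow_pos_of_pos hk α).ne' (exp_ne_zero _), log_exp, log_rpow hk]

lemma isTheta_log_of_isTheta_rpow_mul_exp (hp : 0 < p) (hb : b ≠ 0)
    (hE : E =Θ[atTop] fun k => k ^ α * exp (-k ^ p / b)) :
    (fun k => log (E k)) =Θ[atTop] fun k => k ^ p := by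
  have hlog_sub : (fun k => log (E k) - log (k ^ α * exp (-k ^ p / b))) =o[atTop]
      fun k : ℝ => k ^ p :=
    (isBigO_one_log_sub_log_of_isTheta hE).trans_isLittleO <|
      isLittleO_const_left.2 <| .inr <| tendsto_norm_atTop_atTop.comp (tendsto_rpow_atTop hp)
  have hlog : (fun k => α * log k) =o[atTop] fun k : ℝ => k ^ p :=
    (isLittleO_log_rpow_atTop hp).const_mul_left α
  have hmain : (fun k => -b⁻¹ * k ^ p) =Θ[atTop] fun k : ℝ => k ^ p :=
    isTheta_rfl.const_mul_left (neg_ne_zero.2 (inv_ne_zero hb))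
  refine EventuallyEq.trans_isTheta ?_ ((hlog_sub.add hlog).add_isTheta hmain)
  filter_upwards [eventually_gt_atTop 0] with k hk
  simp only [Pi.add_apply, log_rpow_mul_exp hk]
  ring

lemma isTheta_mul_rpow_of_isTheta_rpow_mul {q : ℝ} {F w : ℝ → ℝ}
    (hE : E =Θ[atTop] fun k => k ^ α * w k) (hF : F =Θ[atTop] fun k => k ^ (α + q) * w k) :
    F =Θ[atTop] fun k => E k * k ^ q := by
  refine hF.trans (EventuallyEq.trans_isTheta ?_ (hE.symm.mul isTheta_rfl))
  filter_upwards [eventually_gt_atTop 0] with k hk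
  rw [rpow_add hk]
  ring

lemma isTheta_rpow_sub_one_of_rightInverse (hp : 0 < p) (hb : b ≠ 0)
    (hE : E =Θ[atTop] fun k => k ^ α * exp (-k ^ p / b))
    (hρ : Tendsto ρ (𝓝[>] 0) atTop) (hEρ : ∀ᶠ s in 𝓝[>] 0, E (ρ s) = s) :
    (fun s => ρ s ^ (p - 1)) =Θ[𝓝[>] 0] fun s => log (1 / s) ^ (1 - 1 / p) := by
  have hρ_pos : ∀ᶠ s in 𝓝[>] 0, 0 < ρ s := hρ.eventually_gt_atTop 0
  have hlog : (fun s => ρ s ^ p) =Θ[𝓝[>] 0] fun s => log (1 / s) := by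
    refine (isTheta_comp_tendsto (isTheta_log_of_isTheta_rpow_mul_exp hp hb hE) hρ).symm.trans ?_
    refine .of_norm_eventuallyEq_norm ?_
    filter_upwards [hEρ] with s hs
    rw [hs, one_div, log_inv, norm_neg]
  refine EventuallyEq.trans_isTheta ?_
    (hlog.rpow (r := 1 - 1 / p) ?_ eventually_log_one_div_nonneg)
  · filter_upwards [hρ_pos] with s hs
    rw [← rpow_mul hs.le, mul_sub, mul_one, mul_one_div_cancel hp.ne']
  · filter_upwards [hρ_pos] with s hs
    positivity

lemma isTheta_deriv_of_rightInverse (hp : 0 < p) (hb : b ≠ 0)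
    (hE : E =Θ[atTop] fun k => k ^ α * exp (-k ^ p / b))
    (hE' : deriv E =Θ[atTop] fun k => k ^ (α + (p - 1)) * exp (-k ^ p / b))
    (hρ : Tendsto ρ (𝓝[>] 0) atTop) (hEρ : ∀ᶠ s in 𝓝[>] 0, E (ρ s) = s)
    (hρ' : deriv ρ =ᶠ[𝓝[>] 0] fun s => (deriv E (ρ s))⁻¹) :
    deriv ρ =Θ[𝓝[>] 0] fun s => (s * log (1 / s) ^ (1 - 1 / p))⁻¹ := by
  refine hρ'.trans_isTheta (IsTheta.inv ?_)
  calc (fun s => deriv E (ρ s))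
      =Θ[𝓝[>] 0] fun s => E (ρ s) * ρ s ^ (p - 1) :=
        isTheta_comp_tendsto (isTheta_mul_rpow_of_isTheta_rpow_mul hE hE') hρ
    _ =Θ[𝓝[>] 0] fun s => s * log (1 / s) ^ (1 - 1 / p) :=
        (EventuallyEq.isTheta hEρ).mul (isTheta_rpow_sub_one_of_rightInverse hp hb hE hρ hEρ)

end ExponentialDecay

theorem stmt13_general (p b α K cm cp : ℝ) (hp : 0 < p) (hb : 0 < b) (hK : 0 ≤ K) (hcm : 0 < cm)
    (E : ℝ → ℝ)
    (hbd : ∀ k, K < k →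
      cm * k ^ α * exp (-k ^ p / b) ≤ E k ∧ E k ≤ cp * k ^ α * exp (-k ^ p / b))
    (hbd' : ∀ k, K < k →
      cm * k ^ (α + p - 1) * exp (-k ^ p / b) ≤ -(deriv E k) ∧
      -(deriv E k) ≤ cp * k ^ (α + p - 1) * exp (-k ^ p / b))
    (s₀ : ℝ) (hs₀ : 0 < s₀) (ρ : ℝ → ℝ)
    (hρ : ∀ s ∈ Ioo 0 s₀, K < ρ s ∧ E (ρ s) = s) :
    (∀ s ∈ Ioo 0 s₀, DifferentiableAt ℝ ρ s) ∧
    ∃ s₁ ∈ Ioo 0 (min s₀ 1), ∃ dm > 0, ∃ dp > 0, ∀ s ∈ Ioo 0 s₁,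
      dm / (s * log (1 / s) ^ (1 - 1 / p)) ≤ -(deriv ρ s) ∧
      -(deriv ρ s) ≤ dp / (s * log (1 / s) ^ (1 - 1 / p)) := by
  have hweight : ∀ (r k : ℝ), K < k → 0 < k ^ r * exp (-k ^ p / b) := fun r k hk =>
    mul_pos (rpow_pos_of_pos (hK.trans_lt hk) r) (exp_pos _)
  simp only [mul_assoc cm, mul_assoc cp, add_sub_assoc] at hbd hbd'
  have hE_pos : ∀ k > K, 0 < E k := fun k hk =>
    (mul_pos hcm (hweight α k hk)).trans_le (hbd k hk).1
  have hE'_neg : ∀ k > K, deriv E k < 0 := fun k hk =>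
    neg_pos.1 ((mul_pos hcm (hweight _ k hk)).trans_le (hbd' k hk).1)
  have hE : E =Θ[atTop] fun k => k ^ α * exp (-k ^ p / b) :=
    isTheta_of_eventually_mul_le hcm
      ((eventually_gt_atTop K).mono fun k hk => (hweight α k hk).le)
      ((eventually_gt_atTop K).mono hbd)
  have hE' : deriv E =Θ[atTop] fun k => k ^ (α + (p - 1)) * exp (-k ^ p / b) :=
    isTheta_neg_left.1 <| isTheta_of_eventually_mul_le hcm
      ((eventually_gt_atTop K).mono fun k hk => (hweight _ k hk).le)
      ((eventually_gt_atTop K).mono hbd')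
  have hderiv : ∀ s ∈ Ioo 0 s₀, HasDerivAt ρ (deriv E (ρ s))⁻¹ s := fun s hs =>
    hasDerivAt_of_deriv_neg_of_rightInverse hE'_neg
      (eventually_of_mem (Ioo_mem_nhds hs.1 hs.2) hρ)
  refine ⟨fun s hs => (hderiv s hs).differentiableAt, ?_⟩
  have hIoo : ∀ᶠ s in 𝓝[>] 0, s ∈ Ioo 0 s₀ := Ioo_mem_nhdsGT hs₀
  have hρ_atTop : Tendsto ρ (𝓝[>] 0) atTop :=
    tendsto_atTop_of_strictAntiOn_of_rightInverse (strictAntiOn_Ioi_of_deriv_neg hE'_neg) hE_pos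
      (hIoo.mono hρ)
  have hρ' : deriv ρ =Θ[𝓝[>] 0] fun s => (s * log (1 / s) ^ (1 - 1 / p))⁻¹ :=
    isTheta_deriv_of_rightInverse hp hb.ne' hE hE' hρ_atTop (hIoo.mono fun s hs => (hρ s hs).2)
      (hIoo.mono fun s hs => (hderiv s hs).deriv)
  have hρ'_nonpos : ∀ᶠ s in 𝓝[>] 0, 0 ≤ -(deriv ρ s) := hIoo.mono fun s hs => by
    rw [(hderiv s hs).deriv, neg_nonneg, inv_nonpos]
    exact (hE'_neg _ (hρ s hs).1).le
  have hscale_nonneg : ∀ᶠ s : ℝ in 𝓝[>] 0, 0 ≤ (s * log (1 / s) ^ (1 - 1 / p))⁻¹ := by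
    filter_upwards [hIoo, eventually_log_one_div_nonneg] with s hs hlog
    exact inv_nonneg.2 (mul_nonneg hs.1.le (rpow_nonneg hlog _))
  obtain ⟨dm, hdm, dp, hdp, hbounds⟩ :=
    exists_eventually_mul_le_of_isTheta hρ'_nonpos hscale_nonneg (isTheta_neg_left.2 hρ')
  obtain ⟨s₁, hs₁, hforall⟩ :=
    exists_mem_Ioo_forall_of_eventually_nhdsGT (lt_min hs₀ one_pos) hbounds
  exact ⟨s₁, hs₁, dm, hdm, dp, hdp, by simpa only [div_eq_mul_inv] using hforall⟩

/-- Let `b > 0`, `α ∈ ℝ`, `K > 1`, `c₋, c₊ > 0`. Let `E : (K,∞) → (0,∞)` be a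
differentiable strictly decreasing function tending to `0` at `∞`, with
`c₋ k^α e^{-k²/b} ≤ E(k) ≤ c₊ k^α e^{-k²/b}` and
`c₋ k^{α+1} e^{-k²/b} ≤ -E'(k) ≤ c₊ k^{α+1} e^{-k²/b}` for `k > K`, and let `ρ` be its
inverse, defined on `(0, s₀)`. Then `ρ` is differentiable and there are
`s₁ ∈ (0, min(s₀,1))` and `d₋, d₊ > 0` with
`d₋ / (s (ln(1/s))^{1/2}) ≤ -ρ'(s) ≤ d₊ / (s (ln(1/s))^{1/2})` for `s ∈ (0, s₁)`. -/
theorem stmt13 (b α K cm cp : ℝ) (hb : 0 < b) (hK : 1 < K) (hcm : 0 < cm) (hcp : 0 < cp)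
    (E : ℝ → ℝ)
    (hdiff : ∀ k, K < k → DifferentiableAt ℝ E k)
    (hanti : StrictAntiOn E (Set.Ioi K))
    (hpos : ∀ k, K < k → 0 < E k)
    (hlim : Tendsto E atTop (nhds 0))
    (hbd : ∀ k, K < k →
      cm * k ^ α * Real.exp (-k ^ 2 / b) ≤ E k ∧ E k ≤ cp * k ^ α * Real.exp (-k ^ 2 / b))
    (hbd' : ∀ k, K < k →
      cm * k ^ (α + 1) * Real.exp (-k ^ 2 / b) ≤ -(deriv E k) ∧
      -(deriv E k) ≤ cp * k ^ (α + 1) * Real.exp (-k ^ 2 / b))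
    (s₀ : ℝ) (hs₀ : 0 < s₀) (ρ : ℝ → ℝ)
    (hρ : ∀ s ∈ Set.Ioo (0 : ℝ) s₀, K < ρ s ∧ E (ρ s) = s) :
    (∀ s ∈ Set.Ioo (0 : ℝ) s₀, DifferentiableAt ℝ ρ s) ∧
    ∃ s₁ ∈ Set.Ioo (0 : ℝ) (min s₀ 1), ∃ dm > (0 : ℝ), ∃ dp > (0 : ℝ),
      ∀ s ∈ Set.Ioo (0 : ℝ) s₁,
        dm / (s * Real.sqrt (Real.log (1 / s))) ≤ -(deriv ρ s) ∧
        -(deriv ρ s) ≤ dp / (s * Real.sqrt (Real.log (1 / s))) := by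
  have hexp : α + 2 - 1 = α + 1 := by ring
  have hlog : (1 : ℝ) - 1 / 2 = 1 / 2 := by norm_num
  simpa only [rpow_two, hexp, hlog, ← sqrt_eq_rpow] using
    stmt13_general 2 b α K cm cp two_pos hb (zero_le_one.trans hK.le) hcm E
      (by simpa only [rpow_two] using hbd) (by simpa only [rpow_two, hexp] using hbd') s₀ hs₀ ρ hρ
end

section
/- Let b > 0, α ∈ ℝ, K > 1 and c₋, c₊ > 0. Let E : (K, ∞) → (0, ∞) be a twice differentiable strictly decreasing function with lim_{k→∞} E(k) = 0, satisfying c₋ k^{α} e^{−k²/b} ≤ E(k) ≤ c₊ k^{α} e^{−k²/b}, c₋ k^{α+1} e^{−k²/b} ≤ −E'(k) ≤ c₊ k^{α+1} e^{−k²/b}, and c₋ k^{α+2} e^{−k²/b} ≤ E''(k) ≤ c₊ k^{α+2} e^{−k²/b} for all k > K, and let ρ be its inverse function, defined on an interval (0, s₀). Then ρ is twice differentiable and there exist s₁ ∈ (0, min(s₀,1)) and constants d₋, d₊ > 0 such that for all s ∈ (0, s₁), d₋ / (s² (ln(1/s))^{1/2}) ≤ ρ''(s) ≤ d₊ / (s²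 (ln(1/s))^{1/2}). -/
open MeasureTheory Real Set Filter

open Asymptotics Topology

/-!
Inverting `E (ρ s) = s` gives `ρ'' = E'' / (-E')³` evaluated at `ρ s`. Let `w k = k^α e^(-k^p/b)`;
the case of interest is `p = 2`. If `E`, `-E'` and `E''` are of order `w`, `k^(p-1) w` and
`k^(2(p-1)) w`, then `ρ''` is of order `1 / (w² k^(p-1))` at `k = ρ s`. Here `w` is of order `s`.
Taking logarithms turns a bounded ratio into a bounded difference, so `log (1/s) ∼ k^p / b`,
and therefore `k^(p-1)` is of order `log (1/s)^((p-1)/p)`.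
-/

section RightInverse

theorem continuousAt_of_strictAntiOn_of_rightInverse_s14 {α β : Type*}
    [LinearOrder α] [DenselyOrdered α] [TopologicalSpace α] [OrderTopology α]
    [LinearOrder β] [TopologicalSpace β] [OrderTopology β]
    {f : α → β} {g : β → α} {V : Set α} {y : β} (hf : StrictAntiOn f V) (hV : V ∈ 𝓝 (g y))
    (hgV : ∀ᶠ z in 𝓝 y, g z ∈ V) (hfg : ∀ᶠ z in 𝓝 y, f (g z) = z) : ContinuousAt g y := by
  have hfy : f (g y) = y := hfg.self_of_nhds
  have hgy : g y ∈ V := mem_of_mem_nhds hV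
  refine tendsto_order.2 ⟨fun a ha ↦ ?_, fun a ha ↦ ?_⟩
  · obtain ⟨l, ⟨hal, hly⟩, hlV⟩ := exists_Ioc_subset_of_mem_nhds' hV ha
    obtain ⟨c, hlc, hcy⟩ := exists_between hly
    have hcV : c ∈ V := hlV ⟨hlc, hcy.le⟩
    have hyc : y < f c := by simpa only [hfy] using hf hcV hgy hcy
    filter_upwards [hgV, hfg, eventually_lt_nhds hyc] with z hzV hfz hzc
    exact (hal.trans_lt hlc).trans ((hf.lt_iff_gt hzV hcV).1 (by rwa [hfz]))
  · obtain ⟨u, ⟨hyu, hua⟩, huV⟩ := exists_Ico_subset_of_mem_nhds' hV ha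
    obtain ⟨c, hyc, hcu⟩ := exists_between hyu
    have hcV : c ∈ V := huV ⟨hyc.le, hcu⟩
    have hcy : f c < y := by simpa only [hfy] using hf hgy hcV hyc
    filter_upwards [hgV, hfg, eventually_gt_nhds hcy] with z hzV hfz hcz
    exact ((hf.lt_iff_gt hcV hzV).1 (by rwa [hfz])).trans (hcu.trans_le hua)

theorem tendsto_atTop_of_antitoneOn_of_rightInverse {α β : Type*} [LinearOrder α] [NoMaxOrder α]
    [LinearOrder β] [TopologicalSpace β] [OrderTopology β] {f : α → β} {g : β → α} {K : α} {a : β}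
    (hf : AntitoneOn f (Ioi K)) (ha : ∀ x ∈ Ioi K, a < f x)
    (hgK : ∀ᶠ y in 𝓝[>] a, g y ∈ Ioi K) (hfg : ∀ᶠ y in 𝓝[>] a, f (g y) = y) :
    Tendsto g (𝓝[>] a) atTop := by
  refine tendsto_atTop.2 fun N ↦ ?_
  obtain ⟨M, hM⟩ := exists_gt (max K N)
  have hKM : M ∈ Ioi K := (le_max_left K N).trans_lt hM
  filter_upwards [hgK, hfg, Ioo_mem_nhdsGT (ha M hKM)] with y hyK hfy hy
  by_contra! hlt
  have hMy : f M ≤ f (g y) := hf hyK hKM (hlt.trans ((le_max_right K N).trans_lt hM)).le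
  exact (hfy ▸ hMy).not_gt hy.2

variable {f g : ℝ → ℝ} {U V : Set ℝ} {y : ℝ}

theorem hasDerivAt_of_rightInvOn {f' : ℝ} (hV : IsOpen V) (hf : StrictAntiOn f V)
    (hf' : HasDerivAt f f' (g y)) (hne : f' ≠ 0) (hU : IsOpen U) (hgU : MapsTo g U V)
    (hfg : RightInvOn g f U) (hy : y ∈ U) : HasDerivAt g f'⁻¹ y := by
  have hgV : ∀ᶠ z in 𝓝 y, g z ∈ V := mem_of_superset (hU.mem_nhds hy) hgU
  have hfg_near : ∀ᶠ z in 𝓝 y, f (g z) = z := mem_of_superset (hU.mem_nhds hy) hfg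
  have hcont : ContinuousAt g y :=
    continuousAt_of_strictAntiOn_of_rightInverse_s14 hf (hV.mem_nhds (hgU hy)) hgV hfg_near
  exact hf'.of_local_left_inverse hcont hne hfg_near

theorem hasDerivAt_deriv_of_rightInvOn {f' : ℝ → ℝ} {f'' : ℝ} (hV : IsOpen V)
    (hf : StrictAntiOn f V) (hf' : ∀ x ∈ V, HasDerivAt f (f' x) x)
    (hf'' : HasDerivAt f' f'' (g y)) (hne : ∀ x ∈ V, f' x ≠ 0) (hU : IsOpen U)
    (hgU : MapsTo g U V) (hfg : RightInvOn g f U) (hy : y ∈ U) :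
    HasDerivAt (deriv g) (f'' / (-f' (g y)) ^ 3) y := by
  have hg : ∀ z ∈ U, HasDerivAt g (f' (g z))⁻¹ z := fun z hz ↦
    hasDerivAt_of_rightInvOn hV hf (hf' _ (hgU hz)) (hne _ (hgU hz)) hU hgU hfg hz
  have hderiv : deriv g =ᶠ[𝓝 y] fun z ↦ (f' (g z))⁻¹ := by
    filter_upwards [hU.mem_nhds hy] with z hz using (hg z hz).deriv
  have hy_ne : f' (g y) ≠ 0 := hne _ (hgU hy)
  have hinv : HasDerivAt (fun z ↦ (f' (g z))⁻¹) (-(f'' * (f' (g y))⁻¹) / f' (g y) ^ 2) y :=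
    (hf''.comp y (hg y hy)).fun_inv hy_ne
  refine (hinv.congr_of_eventuallyEq hderiv).congr_deriv ?_
  rw [Odd.neg_pow (by decide)]
  field_simp

end RightInverse

section Asymptotics

variable {ι : Type*} {l : Filter ι} {f g : ι → ℝ}

theorem isTheta_iff_exists_pos_bounds (hf : 0 ≤ᶠ[l] f) (hg : 0 ≤ᶠ[l] g) :
    f =Θ[l] g ↔ ∃ c > 0, ∃ C > 0, ∀ᶠ x in l, c * g x ≤ f x ∧ f x ≤ C * g x := by
  constructor
  · rintro ⟨hfg, hgf⟩
    obtain ⟨C, hC, hfC⟩ := hfg.exists_pos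
    obtain ⟨c, hc, hgc⟩ := hgf.exists_pos
    refine ⟨c⁻¹, inv_pos.2 hc, C, hC, ?_⟩
    filter_upwards [hfC.bound, hgc.bound, hf, hg] with x hfx hgx hf₀ hg₀
    rw [norm_of_nonneg hf₀, norm_of_nonneg hg₀] at hfx hgx
    exact ⟨(inv_mul_le_iff₀ hc).2 hgx, hfx⟩
  · rintro ⟨c, hc, C, -, hbd⟩
    refine ⟨.of_bound C ?_, .of_bound c⁻¹ ?_⟩ <;>
      filter_upwards [hbd, hf, hg] with x hx hf₀ hg₀ <;>
      rw [norm_of_nonneg hf₀, norm_of_nonneg hg₀]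
    exacts [hx.2, (le_inv_mul_iff₀ hc).2 hx.1]

theorem log_sub_log_le_log {a b C : ℝ} (ha : a ≠ 0) (hab : |a| ≤ C * |b|) :
    log a - log b ≤ log C := by
  have hCb : C * |b| ≠ 0 := ((abs_pos.2 ha).trans_le hab).ne'
  have hlog : log |a| ≤ log (C * |b|) := log_le_log (abs_pos.2 ha) hab
  rw [log_mul (left_ne_zero_of_mul hCb) (right_ne_zero_of_mul hCb), log_abs, log_abs] at hlog
  linarith

theorem isBigO_log_sub_log_of_isTheta (hfg : f =Θ[l] g) :
    (fun x ↦ log (f x) - log (g x)) =O[l] fun _ ↦ (1 : ℝ) := by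
  obtain ⟨C, hfC⟩ := hfg.1.bound
  obtain ⟨c, hgc⟩ := hfg.2.bound
  refine .of_bound (max |log C| |log c|) ?_
  filter_upwards [hfC, hgc, hfg.eq_zero_iff] with x hfx hgx hzero
  rw [norm_one, mul_one, norm_eq_abs]
  by_cases hg₀ : g x = 0
  · simp [hg₀, hzero.2 hg₀]
  have hlog_f := (log_sub_log_le_log (mt hzero.1 hg₀) hfx).trans (le_abs_self _)
  have hlog_g := (log_sub_log_le_log hg₀ hgx).trans (le_abs_self _)
  exact abs_sub_le_iff.2 ⟨le_max_of_le_left hlog_f, le_max_of_le_right hlog_g⟩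

theorem isEquivalent_log_of_isTheta (hfg : f =Θ[l] g)
    (hg : Tendsto (fun x ↦ |log (g x)|) l atTop) :
    (fun x ↦ log (f x)) ~[l] fun x ↦ log (g x) :=
  (isBigO_log_sub_log_of_isTheta hfg).trans_isLittleO ((isLittleO_one_left_iff ℝ).2 hg)

end Asymptotics

theorem exists_pos_bounds_on_Ioo_of_isTheta {f g : ℝ → ℝ} {a u : ℝ} (hau : a < u)
    (hf : 0 ≤ᶠ[𝓝[>] a] f) (hg : 0 ≤ᶠ[𝓝[>] a] g) (hfg : f =Θ[𝓝[>] a] g) :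
    ∃ v ∈ Ioo a u, ∃ c > 0, ∃ C > 0, ∀ x ∈ Ioo a v, c * g x ≤ f x ∧ f x ≤ C * g x := by
  obtain ⟨c, hc, C, hC, hbd⟩ := (isTheta_iff_exists_pos_bounds hf hg).1 hfg
  obtain ⟨w, haw, hwu⟩ := exists_between hau
  obtain ⟨v, ⟨hav, hvw⟩, hv⟩ := (mem_nhdsGT_iff_exists_mem_Ioc_Ioo_subset haw).1 hbd
  exact ⟨v, ⟨hav, hvw.trans_lt hwu⟩, c, hc, C, hC, hv⟩

theorem one_div_sq_mul_log_rpow_nonneg {s : ℝ} (hs : s ∈ Ioo 0 1) (r : ℝ) :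
    0 ≤ 1 / (s ^ 2 * log (1 / s) ^ r) := by
  have hlog : 0 ≤ log (1 / s) := log_nonneg (one_le_one_div hs.1 hs.2.le)
  positivity

/-- The stretched exponential tail `k ^ α * exp (-k ^ p / b)`, the scale against which a function
and its derivatives are compared; `p = 2` is the Gaussian case. -/
noncomputable def stretchedExp (b p α k : ℝ) : ℝ :=
  k ^ α * exp (-k ^ p / b)

section StretchedExp

variable {b p α k : ℝ}

theorem stretchedExp_pos (hk : 0 < k) : 0 < stretchedExp b p α k :=
  mul_pos (rpow_pos_of_pos hk α) (exp_pos _)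

theorem stretchedExp_add (hk : 0 < k) (β : ℝ) :
    stretchedExp b p (α + β) k = k ^ β * stretchedExp b p α k := by
  rw [stretchedExp, stretchedExp, rpow_add hk]
  ring

theorem log_inv_stretchedExp (hk : 0 < k) :
    log (stretchedExp b p α k)⁻¹ = k ^ p / b - α * log k := by
  rw [log_inv, stretchedExp, log_mul (rpow_pos_of_pos hk α).ne' (exp_ne_zero _), log_rpow hk,
    log_exp]
  ring

theorem isEquivalent_log_inv_stretchedExp (hb : b ≠ 0) (hp : 0 < p) (α : ℝ) :
    (fun k ↦ log (stretchedExp b p α k)⁻¹) ~[atTop] fun k ↦ k ^ p / b := by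
  have hlog : (fun k ↦ α * log k) =o[atTop] fun k ↦ k ^ p / b := by
    simpa only [div_eq_inv_mul] using
      ((isLittleO_log_rpow_atTop hp).const_mul_left α).const_mul_right (inv_ne_zero hb)
  refine (IsEquivalent.refl.sub_isLittleO hlog).congr_left ?_
  filter_upwards [eventually_gt_atTop 0] with k hk using (log_inv_stretchedExp hk).symm

variable {E E' E'' : ℝ → ℝ}

theorem isEquivalent_log_inv_of_isTheta_stretchedExp (hb : 0 < b) (hp : 0 < p)
    (hE : E =Θ[atTop] stretchedExp b p α) :
    (fun k ↦ log (E k)⁻¹) ~[atTop] fun k ↦ k ^ p / b := by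
  have hw := isEquivalent_log_inv_stretchedExp hb.ne' hp α
  have hw_atTop : Tendsto (fun k ↦ log (stretchedExp b p α k)⁻¹) atTop atTop :=
    hw.symm.tendsto_atTop ((tendsto_rpow_atTop hp).atTop_div_const hb)
  exact (isEquivalent_log_of_isTheta hE.inv (tendsto_abs_atTop_atTop.comp hw_atTop)).trans hw

theorem isTheta_log_inv_rpow_of_isTheta_stretchedExp (hb : 0 < b) (hp : 0 < p)
    (hE : E =Θ[atTop] stretchedExp b p α) (r : ℝ) :
    (fun k ↦ log (E k)⁻¹ ^ r) =Θ[atTop] fun k ↦ k ^ (p * r) := by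
  have habs : (fun k : ℝ ↦ k ^ p / b) =ᶠ[atTop] fun k ↦ |k ^ p / b| := by
    filter_upwards [eventually_ge_atTop 0] with k hk
    rw [abs_of_nonneg (by positivity)]
  have hequiv : (fun k ↦ log (E k)⁻¹ ^ r) ~[atTop] fun k ↦ |k ^ p / b| ^ r :=
    ((isEquivalent_log_inv_of_isTheta_stretchedExp hb hp hE).congr_right habs).rpow
      fun _ ↦ abs_nonneg _
  have hpow : (fun k : ℝ ↦ |k ^ p / b| ^ r) =ᶠ[atTop] fun k ↦ (b ^ r)⁻¹ * k ^ (p * r) := by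
    filter_upwards [eventually_ge_atTop 0] with k hk
    rw [abs_of_nonneg (by positivity), div_rpow (by positivity) hb.le, ← rpow_mul hk,
      div_eq_inv_mul]
  exact hequiv.isTheta.trans (hpow.isTheta.trans
    ((isTheta_const_mul_left (inv_ne_zero (rpow_pos_of_pos hb r).ne')).2 isTheta_rfl))

theorem isTheta_div_pow_three_of_isTheta_stretchedExp (hb : 0 < b) (hp : 0 < p)
    (hE : E =Θ[atTop] stretchedExp b p α)
    (hE' : E' =Θ[atTop] stretchedExp b p (α + (p - 1)))
    (hE'' : E'' =Θ[atTop] stretchedExp b p (α + 2 * (p - 1))) :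
    (fun k ↦ E'' k / E' k ^ 3) =Θ[atTop]
      fun k ↦ 1 / (E k ^ 2 * log (E k)⁻¹ ^ ((p - 1) / p)) := by
  have hlog := isTheta_log_inv_rpow_of_isTheta_stretchedExp hb hp hE ((p - 1) / p)
  rw [mul_div_cancel₀ _ hp.ne'] at hlog
  have hweights : (fun k ↦
        stretchedExp b p (α + 2 * (p - 1)) k / stretchedExp b p (α + (p - 1)) k ^ 3)
      =ᶠ[atTop] fun k ↦ 1 / (stretchedExp b p α k ^ 2 * k ^ (p - 1)) := by
    filter_upwards [eventually_gt_atTop 0] with k hk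
    have hw : stretchedExp b p α k ≠ 0 := (stretchedExp_pos hk).ne'
    have hkp : k ^ (p - 1) ≠ 0 := (rpow_pos_of_pos hk _).ne'
    rw [stretchedExp_add hk, stretchedExp_add hk, two_mul, rpow_add hk]
    field_simp
  calc (fun k ↦ E'' k / E' k ^ 3)
      =Θ[atTop] fun k ↦
        stretchedExp b p (α + 2 * (p - 1)) k / stretchedExp b p (α + (p - 1)) k ^ 3 :=
        hE''.div (hE'.pow 3)
    _ =Θ[atTop] fun k ↦ 1 / (stretchedExp b p α k ^ 2 * k ^ (p - 1)) := hweights.isTheta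
    _ =Θ[atTop] fun k ↦ 1 / (E k ^ 2 * log (E k)⁻¹ ^ ((p - 1) / p)) :=
        isTheta_rfl.div ((hE.pow 2).mul hlog).symm

theorem isTheta_deriv_deriv_of_rightInvOn {K s₀ : ℝ} {ρ : ℝ → ℝ} (hb : 0 < b) (hp : 0 < p)
    (hE_deriv : ∀ k ∈ Ioi K, HasDerivAt E (E' k) k)
    (hE'_deriv : ∀ k ∈ Ioi K, HasDerivAt E' (E'' k) k)
    (hE_anti : StrictAntiOn E (Ioi K)) (hE_pos : ∀ k ∈ Ioi K, 0 < E k)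
    (hE'_ne : ∀ k ∈ Ioi K, E' k ≠ 0)
    (hE : E =Θ[atTop] stretchedExp b p α)
    (hE' : (fun k ↦ -E' k) =Θ[atTop] stretchedExp b p (α + (p - 1)))
    (hE'' : E'' =Θ[atTop] stretchedExp b p (α + 2 * (p - 1)))
    (hs₀ : 0 < s₀) (hρK : MapsTo ρ (Ioo 0 s₀) (Ioi K)) (hEρ : RightInvOn ρ E (Ioo 0 s₀)) :
    deriv (deriv ρ) =Θ[𝓝[>] 0] fun s ↦ 1 / (s ^ 2 * log (1 / s) ^ ((p - 1) / p)) := by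
  have hmem : ∀ᶠ s in 𝓝[>] (0 : ℝ), s ∈ Ioo 0 s₀ := Ioo_mem_nhdsGT hs₀
  have hρ_atTop : Tendsto ρ (𝓝[>] 0) atTop :=
    tendsto_atTop_of_antitoneOn_of_rightInverse hE_anti.antitoneOn hE_pos
      (hmem.mono fun _ hs ↦ hρK hs) (hmem.mono fun _ hs ↦ hEρ hs)
  have hderiv : deriv (deriv ρ) =ᶠ[𝓝[>] 0] fun s ↦ E'' (ρ s) / (-E' (ρ s)) ^ 3 := by
    filter_upwards [hmem] with s hs
    exact (hasDerivAt_deriv_of_rightInvOn isOpen_Ioi hE_anti hE_deriv (hE'_deriv _ (hρK hs)) hE'_ne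
      isOpen_Ioo hρK hEρ hs).deriv
  have hquot := isTheta_div_pow_three_of_isTheta_stretchedExp hb hp hE hE' hE''
  have hquot_ρ : (fun s ↦ E'' (ρ s) / (-E' (ρ s)) ^ 3) =Θ[𝓝[>] 0]
      fun s ↦ 1 / (E (ρ s) ^ 2 * log (E (ρ s))⁻¹ ^ ((p - 1) / p)) :=
    ⟨hquot.1.comp_tendsto hρ_atTop, hquot.2.comp_tendsto hρ_atTop⟩
  refine hderiv.trans_isTheta (hquot_ρ.trans_eventuallyEq ?_)
  filter_upwards [hmem] with s hs
  rw [hEρ hs, one_div s]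

theorem pos_of_mul_stretchedExp_le {c x : ℝ} (hc : 0 < c) (hk : 0 < k)
    (h : c * stretchedExp b p α k ≤ x) : 0 < x :=
  (mul_pos hc (stretchedExp_pos hk)).trans_le h

theorem isTheta_stretchedExp_of_bounds {c C : ℝ} (hc : 0 < c) (hC : 0 < C)
    (hbd : ∀ᶠ k in atTop, c * stretchedExp b p α k ≤ E k ∧ E k ≤ C * stretchedExp b p α k) :
    E =Θ[atTop] stretchedExp b p α := by
  have hw : ∀ᶠ k in atTop, 0 < stretchedExp b p α k :=
    (eventually_gt_atTop 0).mono fun _ ↦ stretchedExp_pos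
  refine (isTheta_iff_exists_pos_bounds ?_ (hw.mono fun _ ↦ le_of_lt)).2 ⟨c, hc, C, hC, hbd⟩
  filter_upwards [hbd, hw] with k hk hwk using (mul_pos hc hwk).le.trans hk.1

end StretchedExp

theorem stmt14_general (b p α K cm cp : ℝ) (hb : 0 < b) (hp : 0 < p) (hK : 0 ≤ K)
    (hcm : 0 < cm) (hcp : 0 < cp) (E : ℝ → ℝ)
    (hdiff : ∀ k, K < k → DifferentiableAt ℝ E k)
    (hdiff2 : ∀ k, K < k → DifferentiableAt ℝ (deriv E) k)
    (hbd : ∀ k, K < k →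
      cm * stretchedExp b p α k ≤ E k ∧ E k ≤ cp * stretchedExp b p α k)
    (hbd' : ∀ k, K < k →
      cm * stretchedExp b p (α + (p - 1)) k ≤ -deriv E k ∧
      -deriv E k ≤ cp * stretchedExp b p (α + (p - 1)) k)
    (hbd'' : ∀ k, K < k →
      cm * stretchedExp b p (α + 2 * (p - 1)) k ≤ deriv (deriv E) k ∧
      deriv (deriv E) k ≤ cp * stretchedExp b p (α + 2 * (p - 1)) k)
    (s₀ : ℝ) (hs₀ : 0 < s₀) (ρ : ℝ → ℝ)
    (hρ : ∀ s ∈ Ioo (0 : ℝ) s₀, K < ρ s ∧ E (ρ s) = s) :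
    (∀ s ∈ Ioo (0 : ℝ) s₀, DifferentiableAt ℝ ρ s ∧ DifferentiableAt ℝ (deriv ρ) s) ∧
    ∃ s₁ ∈ Ioo (0 : ℝ) (min s₀ 1), ∃ dm > (0 : ℝ), ∃ dp > (0 : ℝ),
      ∀ s ∈ Ioo (0 : ℝ) s₁,
        dm / (s ^ 2 * log (1 / s) ^ ((p - 1) / p)) ≤ deriv (deriv ρ) s ∧
        deriv (deriv ρ) s ≤ dp / (s ^ 2 * log (1 / s) ^ ((p - 1) / p)) := by
  have hE_deriv : ∀ k ∈ Ioi K, HasDerivAt E (deriv E k) k := fun k hk ↦ (hdiff k hk).hasDerivAt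
  have hE'_deriv : ∀ k ∈ Ioi K, HasDerivAt (deriv E) (deriv (deriv E) k) k := fun k hk ↦
    (hdiff2 k hk).hasDerivAt
  have hE_pos : ∀ k ∈ Ioi K, 0 < E k := fun k hk ↦
    pos_of_mul_stretchedExp_le hcm (hK.trans_lt hk) (hbd k hk).1
  have hE'_neg : ∀ k ∈ Ioi K, deriv E k < 0 := fun k hk ↦
    neg_pos.1 (pos_of_mul_stretchedExp_le hcm (hK.trans_lt hk) (hbd' k hk).1)
  have hE''_pos : ∀ k ∈ Ioi K, 0 < deriv (deriv E) k := fun k hk ↦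
    pos_of_mul_stretchedExp_le hcm (hK.trans_lt hk) (hbd'' k hk).1
  have hE'_ne : ∀ k ∈ Ioi K, deriv E k ≠ 0 := fun k hk ↦ (hE'_neg k hk).ne
  have hE_anti : StrictAntiOn E (Ioi K) :=
    strictAntiOn_of_deriv_neg (convex_Ioi K)
      (fun k hk ↦ (hE_deriv k hk).continuousAt.continuousWithinAt)
      (by simpa only [interior_Ioi] using hE'_neg)
  have hρK : MapsTo ρ (Ioo 0 s₀) (Ioi K) := fun s hs ↦ (hρ s hs).1
  have hEρ : RightInvOn ρ E (Ioo 0 s₀) := fun s hs ↦ (hρ s hs).2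
  have hρ' : ∀ s ∈ Ioo 0 s₀, HasDerivAt ρ (deriv E (ρ s))⁻¹ s := fun s hs ↦
    hasDerivAt_of_rightInvOn isOpen_Ioi hE_anti (hE_deriv _ (hρK hs)) (hE'_ne _ (hρK hs))
      isOpen_Ioo hρK hEρ hs
  have hρ'' : ∀ s ∈ Ioo 0 s₀,
      HasDerivAt (deriv ρ) (deriv (deriv E) (ρ s) / (-deriv E (ρ s)) ^ 3) s := fun s hs ↦
    hasDerivAt_deriv_of_rightInvOn isOpen_Ioi hE_anti hE_deriv (hE'_deriv _ (hρK hs)) hE'_ne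
      isOpen_Ioo hρK hEρ hs
  refine ⟨fun s hs ↦ ⟨(hρ' s hs).differentiableAt, (hρ'' s hs).differentiableAt⟩, ?_⟩
  have hK_ev : ∀ᶠ k in atTop, K < k := eventually_gt_atTop K
  have hasymp : deriv (deriv ρ) =Θ[𝓝[>] 0] fun s ↦ 1 / (s ^ 2 * log (1 / s) ^ ((p - 1) / p)) :=
    isTheta_deriv_deriv_of_rightInvOn hb hp hE_deriv hE'_deriv hE_anti hE_pos hE'_ne
      (isTheta_stretchedExp_of_bounds hcm hcp (hK_ev.mono hbd))
      (isTheta_stretchedExp_of_bounds hcm hcp (hK_ev.mono hbd'))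
      (isTheta_stretchedExp_of_bounds hcm hcp (hK_ev.mono hbd'')) hs₀ hρK hEρ
  have hρ''_nonneg : 0 ≤ᶠ[𝓝[>] 0] deriv (deriv ρ) := by
    filter_upwards [Ioo_mem_nhdsGT hs₀] with s hs
    rw [(hρ'' s hs).deriv]
    exact div_nonneg (hE''_pos _ (hρK hs)).le (pow_nonneg (neg_pos.2 (hE'_neg _ (hρK hs))).le 3)
  have hscale_nonneg : 0 ≤ᶠ[𝓝[>] 0] fun s : ℝ ↦ 1 / (s ^ 2 * log (1 / s) ^ ((p - 1) / p)) := by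
    filter_upwards [Ioo_mem_nhdsGT one_pos] with s hs using one_div_sq_mul_log_rpow_nonneg hs _
  simpa only [mul_one_div] using
    exists_pos_bounds_on_Ioo_of_isTheta (lt_min hs₀ one_pos) hρ''_nonneg hscale_nonneg hasymp

/-- Let `b > 0`, `α ∈ ℝ`, `K > 1`, `c₋, c₊ > 0`. Let `E : (K,∞) → (0,∞)` be a twice
differentiable strictly decreasing function tending to `0` at `∞`, with
`c₋ k^α e^{-k²/b} ≤ E(k) ≤ c₊ k^α e^{-k²/b}`,
`c₋ k^{α+1} e^{-k²/b} ≤ -E'(k) ≤ c₊ k^{α+1} e^{-k²/b}` and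
`c₋ k^{α+2} e^{-k²/b} ≤ E''(k) ≤ c₊ k^{α+2} e^{-k²/b}` for `k > K`, and let `ρ` be its
inverse, defined on `(0, s₀)`. Then `ρ` is twice differentiable and there are
`s₁ ∈ (0, min(s₀,1))` and `d₋, d₊ > 0` with
`d₋ / (s² (ln(1/s))^{1/2}) ≤ ρ''(s) ≤ d₊ / (s² (ln(1/s))^{1/2})` for `s ∈ (0, s₁)`. -/
theorem stmt14 (b α K cm cp : ℝ) (hb : 0 < b) (hK : 1 < K) (hcm : 0 < cm) (hcp : 0 < cp)
    (E : ℝ → ℝ)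
    (hdiff : ∀ k, K < k → DifferentiableAt ℝ E k)
    (hdiff2 : ∀ k, K < k → DifferentiableAt ℝ (deriv E) k)
    (hanti : StrictAntiOn E (Set.Ioi K))
    (hpos : ∀ k, K < k → 0 < E k)
    (hlim : Tendsto E atTop (nhds 0))
    (hbd : ∀ k, K < k →
      cm * k ^ α * Real.exp (-k ^ 2 / b) ≤ E k ∧ E k ≤ cp * k ^ α * Real.exp (-k ^ 2 / b))
    (hbd' : ∀ k, K < k →
      cm * k ^ (α + 1) * Real.exp (-k ^ 2 / b) ≤ -(deriv E k) ∧
      -(deriv E k) ≤ cp * k ^ (α + 1) * Real.exp (-k ^ 2 / b))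
    (hbd'' : ∀ k, K < k →
      cm * k ^ (α + 2) * Real.exp (-k ^ 2 / b) ≤ deriv (deriv E) k ∧
      deriv (deriv E) k ≤ cp * k ^ (α + 2) * Real.exp (-k ^ 2 / b))
    (s₀ : ℝ) (hs₀ : 0 < s₀) (ρ : ℝ → ℝ)
    (hρ : ∀ s ∈ Set.Ioo (0 : ℝ) s₀, K < ρ s ∧ E (ρ s) = s) :
    (∀ s ∈ Set.Ioo (0 : ℝ) s₀,
        DifferentiableAt ℝ ρ s ∧ DifferentiableAt ℝ (deriv ρ) s) ∧
    ∃ s₁ ∈ Set.Ioo (0 : ℝ) (min s₀ 1), ∃ dm > (0 : ℝ), ∃ dp > (0 : ℝ),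
      ∀ s ∈ Set.Ioo (0 : ℝ) s₁,
        dm / (s ^ 2 * Real.sqrt (Real.log (1 / s))) ≤ deriv (deriv ρ) s ∧
        deriv (deriv ρ) s ≤ dp / (s ^ 2 * Real.sqrt (Real.log (1 / s))) := by
  have gaussian := stmt14_general b 2 α K cm cp hb two_pos (by linarith) hcm hcp E hdiff hdiff2
  simp only [stretchedExp, ← mul_assoc, rpow_two, show (2 : ℝ) - 1 = 1 by norm_num, mul_one]
    at gaussian
  simpa only [sqrt_eq_rpow] using gaussian hbd hbd' hbd'' s₀ hs₀ ρ hρ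
end

section
/- Let b > 0, let j ≥ 1 be an integer and let m > 2. Then the function F : ℝ → [0, ∞) defined by F(k) := ∫_ℝ (1 + x²)^{−m/4} ψ_{j,∞}(x;k)² dx is integrable on ℝ, i.e. ∫_ℝ F(k) dk < ∞. -/
/-!
The shear `(x, k) ↦ (x, s x - k)` preserves the product measure, so `f x * g (s x - k)` is jointly
integrable as soon as `f` and `g` are, and Fubini integrates it in `x`. Apply this with
`f x = (1 + x²)^(-m/4)`, integrable because `m > 2`, and `g` the square of a Hermite function, then
rescale `k`. Up to a dilation by `√2` the Hermite function is a polynomial times a Gaussian, which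
is square-integrable.
-/

open MeasureTheory Real Set

/-- Physicists' Hermite polynomial via the Rodrigues formula
`H_q(x) = (-1)^q e^{x²} (d^q/dx^q) e^{-x²}`. -/
noncomputable def hermiteP (q : ℕ) (x : ℝ) : ℝ :=
  (-1 : ℝ) ^ q * Real.exp (x ^ 2) * iteratedDeriv q (fun t => Real.exp (-t ^ 2)) x

/-- The normalized Hermite function
`φ_j(x) = (√π (j-1)! 2^(j-1))^{-1/2} H_{j-1}(x) e^{-x²/2}` for `j ≥ 1`. -/
noncomputable def phiF (j : ℕ) (x : ℝ) : ℝ :=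
  (Real.sqrt (Real.sqrt Real.pi * (Nat.factorial (j - 1)) * 2 ^ (j - 1)))⁻¹ *
    hermiteP (j - 1) x * Real.exp (-x ^ 2 / 2)

/-- `ψ_{j,∞}(x;k) = b^{1/4} φ_j(b^{1/2} x - b^{-1/2} k)`. -/
noncomputable def psiInf (b : ℝ) (j : ℕ) (x k : ℝ) : ℝ :=
  b ^ ((1 : ℝ) / 4) * phiF j (Real.sqrt b * x - k / Real.sqrt b)

section Shear

variable {X G R E : Type*} [MeasurableSpace X] {μ : Measure X} [SFinite μ]
  [AddGroup G] [MeasurableSpace G] [MeasurableAdd₂ G] [MeasurableNeg G]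
  {ν : Measure G} [SFinite ν] [ν.IsAddLeftInvariant] [ν.IsNegInvariant]

theorem measurePreserving_prod_sub_of_measurable {s : X → G} (hs : Measurable s) :
    MeasurePreserving (fun z : X × G => (z.1, s z.1 - z.2)) (μ.prod ν) (μ.prod ν) :=
  (MeasurePreserving.id μ).skew_product (g := fun x y => s x - y)
    ((hs.comp measurable_fst).sub measurable_snd)
    (.of_forall fun x => (Measure.measurePreserving_sub_left ν (s x)).map_eq)

theorem integrable_integral_smul_comp_sub [NormedRing R] [NormedAddCommGroup E] [NormedSpace ℝ E]
    [Module R E] [IsBoundedSMul R E] {f : X → R} {g : G → E} {s : X → G}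
    (hf : Integrable f μ) (hg : Integrable g ν) (hs : Measurable s) :
    Integrable (fun k => ∫ x, f x • g (s x - k) ∂μ) ν :=
  ((measurePreserving_prod_sub_of_measurable hs).integrable_comp_of_integrable
    (hf.smul_prod hg)).integral_prod_right

end Shear

theorem integrable_one_add_sq_rpow_neg {r : ℝ} (hr : 1 / 2 < r) :
    Integrable fun x : ℝ => (1 + x ^ 2) ^ (-r) := by
  have h : Integrable fun x : ℝ => (1 + ‖x‖ ^ 2) ^ (-(2 * r) / 2) :=
    integrable_rpow_neg_one_add_norm_sq (by rw [Module.finrank_self, Nat.cast_one]; linarith)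
  have exponent : -(2 * r) / 2 = -r := by ring
  simpa only [Real.norm_eq_abs, sq_abs, exponent] using h

theorem integrable_aeval_mul_exp_neg_mul_sq {R : Type*} [CommSemiring R] [Algebra R ℝ]
    (P : Polynomial R) {b : ℝ} (hb : 0 < b) :
    Integrable fun x : ℝ => Polynomial.aeval x P * exp (-b * x ^ 2) := by
  induction P using Polynomial.induction_on' with
  | add P Q hP hQ => simpa only [map_add, add_mul] using hP.fun_add hQ
  | monomial n a =>
    have hn : (-1 : ℝ) < n := neg_one_lt_zero.trans_le n.cast_nonneg
    simpa only [Polynomial.aeval_monomial, rpow_natCast, mul_assoc] using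
      (integrable_rpow_mul_exp_neg_mul_sq hb hn).const_mul (algebraMap R ℝ a)

theorem hermiteP_eq_aeval_hermite (q : ℕ) (x : ℝ) :
    hermiteP q x = √2 ^ q * Polynomial.aeval (√2 * x) (Polynomial.hermite q) := by
  have gaussian_dilation :
      (fun t : ℝ => exp (-t ^ 2)) = fun t => (fun y => exp (-(y ^ 2 / 2))) (√2 * t) := by
    funext t
    have : (√2 * t) ^ 2 / 2 = t ^ 2 := by rw [mul_pow, sq_sqrt zero_le_two]; ring
    simp only [this]
  have iteratedDeriv_gaussian : iteratedDeriv q (fun t : ℝ => exp (-t ^ 2)) x =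
      √2 ^ q * iteratedDeriv q (fun y => exp (-(y ^ 2 / 2))) (√2 * x) := by
    have gaussian_contDiff : ContDiff ℝ q fun y : ℝ => exp (-(y ^ 2 / 2)) := by fun_prop
    rw [gaussian_dilation, iteratedDeriv_comp_const_mul gaussian_contDiff]
  have exp_sq : exp (x ^ 2) = exp ((√2 * x) ^ 2 / 2) := by
    rw [mul_pow, sq_sqrt zero_le_two, mul_div_cancel_left₀ _ two_ne_zero]
  rw [hermiteP, iteratedDeriv_gaussian, iteratedDeriv_eq_iterate,
    Polynomial.hermite_eq_deriv_gaussian', exp_sq]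
  ring

theorem integrable_phiF_sq (j : ℕ) : Integrable fun x => phiF j x ^ 2 := by
  set c : ℝ := (√(√π * (j - 1).factorial * 2 ^ (j - 1)))⁻¹ * √2 ^ (j - 1)
  have phiF_sq (x : ℝ) : phiF j x ^ 2 =
      c ^ 2 * (Polynomial.aeval (√2 * x) (Polynomial.hermite (j - 1) ^ 2) *
        exp (-(1 / 2) * (√2 * x) ^ 2)) := by
    have exp_sq : exp (-x ^ 2 / 2) ^ 2 = exp (-(1 / 2) * (√2 * x) ^ 2) := by
      rw [← exp_nat_mul, mul_pow, sq_sqrt zero_le_two]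
      ring_nf
    rw [phiF, hermiteP_eq_aeval_hermite, map_pow, ← exp_sq]
    ring
  simp only [phiF_sq]
  exact ((integrable_aeval_mul_exp_neg_mul_sq _ one_half_pos).comp_mul_left'
    (sqrt_ne_zero'.mpr zero_lt_two)).const_mul _

/-- Let `b > 0`, `j ≥ 1` an integer and `m > 2`. Then the function
`F(k) := ∫_ℝ (1 + x²)^{-m/4} ψ_{j,∞}(x;k)² dx` is integrable on `ℝ`. -/
theorem stmt19 (b : ℝ) (hb : 0 < b) (j : ℕ) (hj : 1 ≤ j) (m : ℝ) (hm : 2 < m) :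
    Integrable (fun k : ℝ =>
      ∫ x : ℝ, (1 + x ^ 2) ^ (-(m / 4)) * (psiInf b j x k) ^ 2) := by
  have weight_integrable : Integrable fun x : ℝ => (1 + x ^ 2) ^ (-(m / 4)) :=
    integrable_one_add_sq_rpow_neg (by linarith)
  have profile_integrable : Integrable fun t => (b ^ ((1 : ℝ) / 4) * phiF j t) ^ 2 := by
    simpa only [mul_pow] using (integrable_phiF_sq j).const_mul ((b ^ ((1 : ℝ) / 4)) ^ 2)
  exact (integrable_integral_smul_comp_sub weight_integrable profile_integrable
    (measurable_const_mul √b)).comp_div (sqrt_ne_zero'.mpr hb)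
end
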